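/- arXiv:1002.4318 — 4 statements merged into one kernel-verified Lean document; each statement's English description precedes it below -/
import Mathlib

section
/- The set {a0, Δ, γ_0} is a homogeneous system of parameters for F[V]: the three polynomials are algebraically independent over F and F[V] is a finitely generated module over the subalgebra F[a0, Δ, γ_0]; equivalently, the only common zero of a0, Δ, γ_0 over an algebraic closure of F is the origin. -/
open MvPolynomial

/-!
A finite set of homogeneous polynomials of positive degree in `F[V]` whose only common zero is the
origin generates, by the Nullstellensatz, an ideal containing every form of large degree. Graded
Nakayama then lets the finitely many remaining degrees span `F[V]` over the subalgebra generated by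
the set, and comparing transcendence degrees makes three such generators algebraically independent.

On `a0 = Δ = 0` one has `a1² = 0`, and each linear factor `a2 + b a1 + c a0` of `γ` reduces to `a2`,
whatever its coefficients.
-/

section GradedAlgebra

variable {R A : Type*} [CommSemiring R] [CommSemiring A] [Algebra R A]
  (𝒜 : ℕ → Submodule R A) [GradedAlgebra 𝒜] {s : Set A}

/-- In a relation of degree `n` the coefficient of `f ∈ s` has degree less than `n`, because `f` has
positive degree. -/
theorem decompose_mem_of_mem_span {N : Submodule (Algebra.adjoin R s) A}
    (hs : ∀ f ∈ s, ∃ d ≠ 0, f ∈ 𝒜 d) {n : ℕ} (hN : ∀ m < n, ∀ a ∈ 𝒜 m, a ∈ N)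
    {a : A} (ha : a ∈ Ideal.span s) : (DirectSum.decompose 𝒜 a n : A) ∈ N := by
  induction ha using Submodule.closure_induction with
  | zero => simp
  | add x y _ _ hx hy => simpa using N.add_mem hx hy
  | smul_mem g f hf =>
    obtain ⟨d, hd, hfd⟩ := hs f hf
    rw [smul_eq_mul]
    rcases le_or_gt d n with hdn | hnd
    · rw [DirectSum.coe_decompose_mul_of_right_mem_of_le 𝒜 hfd hdn, mul_comm]
      exact N.smul_mem ⟨f, Algebra.subset_adjoin hf⟩ (hN _ (by lia) _ (SetLike.coe_mem _))
    · rw [DirectSum.coe_decompose_mul_of_right_mem_of_not_le 𝒜 hfd hnd.not_ge]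
      exact N.zero_mem

theorem eq_top_of_forall_mem_or_mem_span {N : Submodule (Algebra.adjoin R s) A}
    (hs : ∀ f ∈ s, ∃ d ≠ 0, f ∈ 𝒜 d)
    (hN : ∀ n, ∀ a ∈ 𝒜 n, a ∈ N ∨ a ∈ Ideal.span s) : N = ⊤ := by
  have hom_mem (n : ℕ) : ∀ a ∈ 𝒜 n, a ∈ N := by
    induction n using Nat.strong_induction_on with
    | h n ih =>
      intro a ha
      refine (hN n a ha).elim id fun hspan ↦ ?_
      rw [← DirectSum.decompose_of_mem_same 𝒜 ha]
      exact decompose_mem_of_mem_span 𝒜 hs ih hspan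
  classical
  refine (Submodule.eq_top_iff' ..).2 fun a ↦ ?_
  rw [← DirectSum.sum_support_decompose 𝒜 a]
  exact N.sum_mem fun n _ ↦ hom_mem n _ (SetLike.coe_mem _)

theorem finite_adjoin_of_forall_mem_span (hfg : ∀ n, (𝒜 n).FG)
    (hs : ∀ f ∈ s, ∃ d ≠ 0, f ∈ 𝒜 d) {m : ℕ}
    (hm : ∀ n ≥ m, ∀ a ∈ 𝒜 n, a ∈ Ideal.span s) :
    Module.Finite (Algebra.adjoin R s) A := by
  obtain ⟨t, ht⟩ : (⨆ n ∈ Finset.range m, 𝒜 n).FG :=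
    Submodule.fg_biSup _ _ fun n _ ↦ hfg n
  refine ⟨t, eq_top_of_forall_mem_or_mem_span 𝒜 hs fun n a ha ↦ ?_⟩
  refine (lt_or_ge n m).imp (fun hnm ↦ ?_) fun hmn ↦ hm n hmn a ha
  have hle : 𝒜 n ≤ Submodule.span R t :=
    ht ▸ le_iSup₂_of_le n (Finset.mem_range.2 hnm) le_rfl
  exact Submodule.span_le_restrictScalars R _ _ (hle ha)

end GradedAlgebra

section Nullstellensatz

variable {σ k : Type*} [Finite σ] [Field k] {s : Set (MvPolynomial σ k)}

theorem exists_pow_idealOfVars_le_span (K : Type*) [Field K] [IsAlgClosed K] [Algebra k K]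
    (hs : ∀ x : σ → K, (∀ f ∈ s, aeval x f = 0) → x = 0) :
    ∃ m, idealOfVars σ k ^ m ≤ Ideal.span s := by
  refine Ideal.exists_pow_le_of_le_radical_of_fg ?_ (idealOfVars_fg σ k)
  rw [← vanishingIdeal_zeroLocus_eq_radical (K := K), zeroLocus_span, Ideal.span_le]
  rintro _ ⟨i, rfl⟩ x hx
  simp [hs x hx]

theorem finite_adjoin_of_forall_aeval_eq_zero (K : Type*) [Field K] [IsAlgClosed K] [Algebra k K]
    (hhom : ∀ f ∈ s, ∃ d ≠ 0, f.IsHomogeneous d)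
    (hs : ∀ x : σ → K, (∀ f ∈ s, aeval x f = 0) → x = 0) :
    Module.Finite (Algebra.adjoin k s) (MvPolynomial σ k) := by
  let := gradedAlgebra (σ := σ) (R := k)
  obtain ⟨m, hm⟩ := exists_pow_idealOfVars_le_span K hs
  refine finite_adjoin_of_forall_mem_span (homogeneousSubmodule σ k)
    (homogeneousSubmodule_fg σ k) hhom (m := m) fun n hn f (hf : f.IsHomogeneous n) ↦
      hm ((mem_pow_idealOfVars_iff ..).2 fun e he ↦ ?_)
  exact hn.trans_eq (hf.degree_eq_sum_deg_support he)

end Nullstellensatz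

theorem algebraicIndependent_of_isAlgebraic_adjoin {σ R : Type*} [Finite σ] [CommRing R]
    [IsDomain R] (f : σ → MvPolynomial σ R)
    [Algebra.IsAlgebraic (Algebra.adjoin R (Set.range f)) (MvPolynomial σ R)] :
    AlgebraicIndependent R f :=
  (Algebra.IsAlgebraic.isTranscendenceBasis_of_lift_le_trdeg_of_finite R f
    (by simp [MvPolynomial.trdeg_of_isDomain])).1

section SystemOfParameters

variable {F ι : Type*} [Fintype ι] [Nonempty ι]

theorem eq_zero_of_aeval_discrim_eq_zero [CommRing F] {K : Type*} [CommRing K] [IsReduced K]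
    [Algebra F K] (b c : ι → F) {x : Fin 3 → K} (h₀ : x 0 = 0)
    (hΔ : aeval x (X 1 ^ 2 - X 0 * X 2 : MvPolynomial (Fin 3) F) = 0)
    (hγ : aeval x (∏ i, (X 2 + C (b i) * X 1 + C (c i) * X 0)) = 0) : x = 0 := by
  have h₁ : x 1 = 0 := by simpa [h₀] using hΔ
  have h₂ : x 2 = 0 := by simpa [h₀, h₁, Fintype.card_ne_zero] using hγ
  ext i
  fin_cases i <;> assumption

theorem hsop_for_P_general [Field F] (b c : ι → F) (Δ γ : MvPolynomial (Fin 3) F)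
    (hΔ : Δ = X 1 ^ 2 - X 0 * X 2) (hγ : γ = ∏ i, (X 2 + C (b i) * X 1 + C (c i) * X 0)) :
    AlgebraicIndependent F ![X 0, Δ, γ] ∧
    Module.Finite (Algebra.adjoin F {X 0, Δ, γ}) (MvPolynomial (Fin 3) F) ∧
    ∀ x : Fin 3 → AlgebraicClosure F,
      aeval x (X 0 : MvPolynomial (Fin 3) F) = 0 → aeval x Δ = 0 → aeval x γ = 0 → x = 0 := by
  have hzero (x : Fin 3 → AlgebraicClosure F) (h₀ : aeval x (X 0 : MvPolynomial (Fin 3) F) = 0)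
      (h₁ : aeval x Δ = 0) (h₂ : aeval x γ = 0) : x = 0 :=
    eq_zero_of_aeval_discrim_eq_zero b c (by simpa using h₀) (hΔ ▸ h₁) (hγ ▸ h₂)
  have hΔ_hom : Δ.IsHomogeneous 2 :=
    hΔ ▸ (isHomogeneous_X_pow 1 2).sub ((isHomogeneous_X F 0).mul (isHomogeneous_X F 2))
  have hγ_hom : γ.IsHomogeneous (∑ _ : ι, 1) :=
    hγ ▸ .prod _ _ _ fun i _ ↦
      ((isHomogeneous_X F 2).add (isHomogeneous_C_mul_X _ 1)).add (isHomogeneous_C_mul_X _ 0)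
  have hfin : Module.Finite (Algebra.adjoin F {X 0, Δ, γ}) (MvPolynomial (Fin 3) F) := by
    refine finite_adjoin_of_forall_aeval_eq_zero (AlgebraicClosure F) ?_ fun x hx ↦ ?_
    · rintro f (rfl | rfl | rfl)
      exacts [⟨1, one_ne_zero, isHomogeneous_X F 0⟩, ⟨2, two_ne_zero, hΔ_hom⟩,
        ⟨_, by simp, hγ_hom⟩]
    · exact hzero x (hx _ (by simp)) (hx _ (by simp)) (hx _ (by simp))
  refine ⟨?_, hfin, hzero⟩
  have hrange : Set.range ![X 0, Δ, γ] = {X 0, Δ, γ} := by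
    simp only [Matrix.range_cons, Matrix.range_empty, Set.union_empty, Set.singleton_union]
  rw [← hrange] at hfin
  exact algebraicIndependent_of_isAlgebraic_adjoin _

end SystemOfParameters

/-- `{a0, Δ, γ₀}` is a homogeneous system of parameters for `F[V] = F[a0,a1,a2]`:
the three polynomials are algebraically independent over `F`, `F[V]` is a finite module over
`F[a0, Δ, γ₀]`, and their only common zero over an algebraic closure of `F` is the origin. -/
theorem hsop_for_P (F : Type*) [Field F] (p n q : ℕ) (hp : p.Prime) (hp2 : p ≠ 2)
    [CharP F p] (hn : n ≠ 0) (hq : q = p ^ n)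
    (Fq : Type*) [Field Fq] [Fintype Fq] [Algebra Fq F] (hcard : Fintype.card Fq = q)
    (Δ γ₀ : MvPolynomial (Fin 3) F)
    (hΔ : Δ = X 1 ^ 2 - X 0 * X 2)
    (hγ : γ₀ = ∏ c : Fq,
      (X 2 + C (2 * algebraMap Fq F c) * X 1 + C ((algebraMap Fq F c) ^ 2) * X 0)) :
    AlgebraicIndependent F ![(X 0 : MvPolynomial (Fin 3) F), Δ, γ₀] ∧
    Module.Finite (Algebra.adjoin F {(X 0 : MvPolynomial (Fin 3) F), Δ, γ₀})
      (MvPolynomial (Fin 3) F) ∧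
    ∀ x : Fin 3 → AlgebraicClosure F,
      aeval x (X 0 : MvPolynomial (Fin 3) F) = 0 → aeval x Δ = 0 → aeval x γ₀ = 0 → x = 0 :=
  hsop_for_P_general _ _ Δ γ₀ hΔ hγ
end

section
/- The ring of P-invariants is generated by a0, Δ, β, γ_0; that is, F[V]^P = F[a0, Δ, β, γ_0]. -/
open MvPolynomial
open scoped Classical

/-- The algebra automorphism of `F[a0,a1,a2]` induced by the upper-triangular matrix `σ_c`:
`a0 ↦ a0`, `a1 ↦ a1 + c·a0`, `a2 ↦ a2 + 2c·a1 + c²·a0`.  Here `a_i = X i`. -/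
noncomputable def σP (F : Type*) [Field F] (c : F) :
    MvPolynomial (Fin 3) F →ₐ[F] MvPolynomial (Fin 3) F :=
  aeval ![X 0, X 1 + C c * X 0, X 2 + C (2 * c) * X 1 + C (c ^ 2) * X 0]

/-- The algebra automorphism of `F[a0,a1,a2]` induced by `τ`: `a0 ↦ a2`, `a1 ↦ -a1`, `a2 ↦ a0`. -/
noncomputable def τA (F : Type*) [Field F] :
    MvPolynomial (Fin 3) F →ₐ[F] MvPolynomial (Fin 3) F :=
  aeval ![X 2, -X 1, X 0]

/-!
After inverting `a₀` the ring becomes `S[a₁]` with `S = F[a₀, Δ]`, because `a₀ a₂ = a₁² - Δ`, and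
`P` acts by the translations `a₁ ↦ a₁ + c a₀`. Division with remainder by `β = ∏ (a₁ + c a₀)`
shows that the invariants of `S[a₁]` are `S[β]`. Hence every invariant lands in
`A = F[a₀, Δ, β, γ₀]` after multiplication by a power of `a₀`, and it suffices that `a₀ g ∈ A`
implies `g ∈ A`.

As a polynomial in `a₁`, `β` is additive, so multiplying the values at `a₁ ± √Δ` gives
`β² = ∏ (Δ - c² a₀²) + a₀^q γ₀`. Thus `a₀ g = r + u β` with `r, u ∈ F[a₀, Δ, γ₀]`. The involution
`a₁ ↦ -a₁` fixes `r` and `u` and changes the sign of `β`, so `r + u β` and `r - u β` both vanish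
modulo `a₀`, and therefore so do `r` and `u`. Since `Δ` and `γ₀` stay algebraically independent
modulo `a₀`, this makes `r` and `u` multiples of `a₀` within `F[a₀, Δ, γ₀]`, and `g ∈ A` follows.
-/

section Translation

open scoped Polynomial

variable {S E : Type*} [CommRing S]

lemma divByMonic_modByMonic_taylor {b : S[X]} (hb : b.Monic) (a : S) (G : S[X]) :
    Polynomial.taylor a G /ₘ Polynomial.taylor a b = Polynomial.taylor a (G /ₘ b) ∧
      Polynomial.taylor a G %ₘ Polynomial.taylor a b = Polynomial.taylor a (G %ₘ b) := by
  nontriviality S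
  refine Polynomial.div_modByMonic_unique _ _ ((Polynomial.leadingCoeff_taylor _ _).trans hb)
    ⟨?_, ?_⟩
  · conv_rhs => rw [← Polynomial.modByMonic_add_div G b, map_add, Polynomial.taylor_mul]
  · rw [Polynomial.degree_taylor, Polynomial.degree_taylor]
    exact Polynomial.degree_modByMonic_lt G hb

variable [AddCommGroup E] [Fintype E]

/-- The polynomial `∏ c, (X + ι c)`, whose value at `x` is the product of the orbit of `x` under
translation by the elements `ι c`. -/
noncomputable def orbitPoly (ι : E →+ S) : S[X] := ∏ c, (Polynomial.X + Polynomial.C (ι c))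

lemma eval_orbitPoly (ι : E →+ S) (x : S) : (orbitPoly ι).eval x = ∏ c, (x + ι c) := by
  simp [orbitPoly, Polynomial.eval_prod]

lemma eval_orbitPoly_zero (ι : E →+ S) : (orbitPoly ι).eval 0 = 0 := by
  rw [eval_orbitPoly]
  exact Finset.prod_eq_zero (Finset.mem_univ 0) (by simp)

lemma monic_orbitPoly (ι : E →+ S) : (orbitPoly ι).Monic :=
  Polynomial.monic_prod_of_monic _ _ fun _ _ => Polynomial.monic_X_add_C _

lemma natDegree_orbitPoly [Nontrivial S] (ι : E →+ S) :
    (orbitPoly ι).natDegree = Fintype.card E := by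
  rw [orbitPoly, Polynomial.natDegree_prod_of_monic _ _ fun _ _ => Polynomial.monic_X_add_C _]
  simp

lemma taylor_orbitPoly (ι : E →+ S) (c : E) :
    Polynomial.taylor (ι c) (orbitPoly ι) = orbitPoly ι := by
  rw [orbitPoly, Polynomial.taylor_apply, Polynomial.prod_comp]
  exact Fintype.prod_equiv (Equiv.addLeft c) _ _ fun d => by simp [add_assoc]

variable [IsDomain S]

lemma eq_C_of_degree_lt_of_eval_eq {ι : E →+ S} (hι : Function.Injective ι) {G : S[X]} {a : S}
    (hdeg : G.degree < (orbitPoly ι).degree) (hG : ∀ c, G.eval (ι c) = a) : G = Polynomial.C a := by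
  have hcard : (orbitPoly ι).degree = (Finset.univ : Finset E).card := by
    rw [Polynomial.degree_eq_natDegree (monic_orbitPoly ι).ne_zero, natDegree_orbitPoly,
      Finset.card_univ]
  have hC : (Polynomial.C a).degree < (orbitPoly ι).degree := by
    refine Polynomial.degree_C_le.trans_lt ?_
    rw [hcard]
    exact_mod_cast Fintype.card_pos (α := E)
  rw [hcard] at hdeg hC
  exact Polynomial.eq_of_degrees_lt_of_eval_index_eq _ hι.injOn hdeg hC fun c _ => by simp [hG]

lemma eval_orbitPoly_add {ι : E →+ S} (hι : Function.Injective ι) (x y : S) :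
    (orbitPoly ι).eval (x + y) = (orbitPoly ι).eval x + (orbitPoly ι).eval y := by
  have hdiff : Polynomial.taylor y (orbitPoly ι) - orbitPoly ι =
      Polynomial.C ((orbitPoly ι).eval y) := by
    refine eq_C_of_degree_lt_of_eval_eq hι ?_ fun c => ?_
    · exact Polynomial.degree_sub_lt_right (Polynomial.degree_taylor _ _)
        (monic_orbitPoly ι).ne_zero (Polynomial.leadingCoeff_taylor _ _)
    · have hc (z : S) : (orbitPoly ι).eval (z + ι c) = (orbitPoly ι).eval z := by
        rw [← Polynomial.taylor_eval, taylor_orbitPoly]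
      rw [Polynomial.eval_sub, Polynomial.taylor_eval, add_comm, hc, ← zero_add (ι c), hc,
        eval_orbitPoly_zero, sub_zero]
  have hx := congrArg (Polynomial.eval x) hdiff
  rw [Polynomial.eval_sub, Polynomial.taylor_eval, Polynomial.eval_C] at hx
  linear_combination hx

lemma eval_orbitPoly_neg {ι : E →+ S} (hι : Function.Injective ι) (x : S) :
    (orbitPoly ι).eval (-x) = -(orbitPoly ι).eval x := by
  rw [eq_neg_iff_add_eq_zero, ← eval_orbitPoly_add hι, neg_add_cancel, eval_orbitPoly_zero]

lemma prod_add_sq_sub_sq {ι : E →+ S} (hι : Function.Injective ι) (x w : S) :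
    ∏ c, ((x + ι c) ^ 2 - w ^ 2) = (∏ c, (x + ι c)) ^ 2 - ∏ c, (w ^ 2 - ι c ^ 2) := by
  have hw : (∏ c, (w + ι c)) ^ 2 = ∏ c, (w ^ 2 - ι c ^ 2) := by
    have hneg : ∏ c, (w + ι c) = ∏ c, (w - ι c) :=
      Fintype.prod_equiv (Equiv.neg E) _ _ fun c => by simp
    rw [sq]
    nth_rw 2 [hneg]
    simp_rw [sq_sub_sq, Finset.prod_mul_distrib]
  calc ∏ c, ((x + ι c) ^ 2 - w ^ 2)
      = (orbitPoly ι).eval (x + w) * (orbitPoly ι).eval (x + -w) := by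
        rw [eval_orbitPoly, eval_orbitPoly, ← Finset.prod_mul_distrib]
        exact Finset.prod_congr rfl fun c _ => by ring
    _ = (orbitPoly ι).eval x ^ 2 - (orbitPoly ι).eval w ^ 2 := by
        rw [eval_orbitPoly_add hι, eval_orbitPoly_add hι, eval_orbitPoly_neg hι]
        ring
    _ = (∏ c, (x + ι c)) ^ 2 - ∏ c, (w ^ 2 - ι c ^ 2) := by
        rw [eval_orbitPoly, eval_orbitPoly, hw]

/-- As `z` need not be a square, both sides are compared as polynomials in `z`, after substituting
`X ^ 2` for the variable. -/
lemma prod_add_sq_sub {ι : E →+ S} (hι : Function.Injective ι) (x z : S) :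
    ∏ c, ((x + ι c) ^ 2 - z) = (∏ c, (x + ι c)) ^ 2 - ∏ c, (z - ι c ^ 2) := by
  have hpoly : ∏ c, (Polynomial.C (x + ι c) ^ 2 - Polynomial.X) =
      (∏ c, Polynomial.C (x + ι c)) ^ 2 - ∏ c, (Polynomial.X - Polynomial.C (ι c) ^ 2) := by
    apply Polynomial.expand_injective (R := S) two_pos
    simpa using prod_add_sq_sub_sq (ι := (Polynomial.C : S →+* S[X]).toAddMonoidHom.comp ι)
      ((Polynomial.C_injective).comp hι) (Polynomial.C x) Polynomial.X
  simpa [Polynomial.eval_prod] using congrArg (Polynomial.eval z) hpoly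

lemma mem_adjoin_orbitPoly {ι : E →+ S} (hι : Function.Injective ι) {G : S[X]}
    (hG : ∀ c, Polynomial.taylor (ι c) G = G) : G ∈ Algebra.adjoin S {orbitPoly ι} := by
  have const_of_degree_lt {r : S[X]} (hr : ∀ c, Polynomial.taylor (ι c) r = r)
      (hdeg : r.degree < (orbitPoly ι).degree) : r = Polynomial.C (r.eval 0) :=
    eq_C_of_degree_lt_of_eval_eq hι hdeg fun c => by
      rw [← zero_add (ι c), ← Polynomial.taylor_eval, hr]
  have const_mem (a : S) : Polynomial.C a ∈ Algebra.adjoin S {orbitPoly ι} :=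
    Subalgebra.algebraMap_mem _ a
  induction hN : G.natDegree using Nat.strong_induction_on generalizing G with
  | _ N ih =>
  by_cases hlt : G.degree < (orbitPoly ι).degree
  · rw [const_of_degree_lt hG hlt]
    exact const_mem _
  have hdiv c := divByMonic_modByMonic_taylor (monic_orbitPoly ι) (ι c) G
  simp only [hG, taylor_orbitPoly] at hdiv
  have hquot : G /ₘ orbitPoly ι ∈ Algebra.adjoin S {orbitPoly ι} := by
    refine ih _ ?_ (fun c => (hdiv c).1.symm) rfl
    have hle := Polynomial.natDegree_le_natDegree (not_lt.1 hlt)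
    have hpos : 0 < Fintype.card E := Fintype.card_pos
    rw [natDegree_orbitPoly] at hle
    rw [Polynomial.natDegree_divByMonic _ (monic_orbitPoly ι), natDegree_orbitPoly]
    omega
  rw [← Polynomial.modByMonic_add_div G (orbitPoly ι),
    const_of_degree_lt (fun c => (hdiv c).2.symm)
      (Polynomial.degree_modByMonic_lt G (monic_orbitPoly ι))]
  exact add_mem (const_mem _) (mul_mem (Algebra.self_mem_adjoin_singleton S _) hquot)

lemma mem_adjoin_orbit_prod {A : Type*} [CommRing A] [Algebra S A] {x : A}
    (hx : Transcendental S x) {ι : E →+ S} (hι : Function.Injective ι) (σ : E → A →ₐ[S] A)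
    (hσ : ∀ c, σ c x = x + algebraMap S A (ι c)) {f : A} (hf : f ∈ Algebra.adjoin S {x})
    (hinv : ∀ c, σ c f = f) : f ∈ Algebra.adjoin S {∏ c, (x + algebraMap S A (ι c))} := by
  rw [Algebra.adjoin_singleton_eq_range_aeval, AlgHom.mem_range] at hf
  obtain ⟨G, rfl⟩ := hf
  have hG : G ∈ Algebra.adjoin S {orbitPoly ι} := mem_adjoin_orbitPoly hι fun c => by
    apply transcendental_iff_injective.1 hx
    have h := hinv c
    rw [← Polynomial.aeval_algHom_apply, hσ] at h
    simpa [Polynomial.taylor_apply, Polynomial.aeval_comp] using h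
  have hmap : Polynomial.aeval x G ∈
      (Algebra.adjoin S {orbitPoly ι}).map (Polynomial.aeval x) := ⟨G, hG, rfl⟩
  rw [AlgHom.map_adjoin_singleton] at hmap
  simpa [orbitPoly, map_prod] using hmap

end Translation

section Adjoin

variable {R A : Type*} [CommRing R] [CommRing A] [Algebra R A]

lemma exists_eq_mul_add_of_mem_adjoin_insert {t f : A} {s : Set A}
    (hf : f ∈ Algebra.adjoin R (insert t s)) :
    ∃ g ∈ Algebra.adjoin R (insert t s), ∃ r ∈ Algebra.adjoin R s, f = t * g + r := by
  have hle : Algebra.adjoin R s ≤ Algebra.adjoin R (insert t s) :=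
    Algebra.adjoin_mono (Set.subset_insert t s)
  induction hf using Algebra.adjoin_induction with
  | mem x hx =>
    rcases hx with rfl | hx
    · exact ⟨1, one_mem _, 0, zero_mem _, by ring⟩
    · exact ⟨0, zero_mem _, x, Algebra.subset_adjoin hx, by ring⟩
  | algebraMap a => exact ⟨0, zero_mem _, _, algebraMap_mem _ a, by ring⟩
  | add _ _ _ _ hx hy =>
    obtain ⟨g, hg, r, hr, rfl⟩ := hx
    obtain ⟨g', hg', r', hr', rfl⟩ := hy
    exact ⟨g + g', add_mem hg hg', r + r', add_mem hr hr', by ring⟩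
  | mul _ _ _ hy' hx hy =>
    obtain ⟨g, hg, r, hr, rfl⟩ := hx
    obtain ⟨g', hg', r', hr', rfl⟩ := hy
    exact ⟨g * (t * g' + r') + r * g', add_mem (mul_mem hg hy') (mul_mem (hle hr) hg'), r * r',
      mul_mem hr hr', by ring⟩

lemma exists_eq_add_mul_of_mem_adjoin_insert_of_sq_mem {b f : A} {s : Set A}
    (hb : b ^ 2 ∈ Algebra.adjoin R s) (hf : f ∈ Algebra.adjoin R (insert b s)) :
    ∃ r ∈ Algebra.adjoin R s, ∃ u ∈ Algebra.adjoin R s, f = r + u * b := by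
  induction hf using Algebra.adjoin_induction with
  | mem x hx =>
    rcases hx with rfl | hx
    · exact ⟨0, zero_mem _, 1, one_mem _, by ring⟩
    · exact ⟨x, Algebra.subset_adjoin hx, 0, zero_mem _, by ring⟩
  | algebraMap a => exact ⟨_, algebraMap_mem _ a, 0, zero_mem _, by ring⟩
  | add _ _ _ _ hx hy =>
    obtain ⟨r, hr, u, hu, rfl⟩ := hx
    obtain ⟨r', hr', u', hu', rfl⟩ := hy
    exact ⟨r + r', add_mem hr hr', u + u', add_mem hu hu', by ring⟩
  | mul _ _ _ _ hx hy =>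
    obtain ⟨r, hr, u, hu, rfl⟩ := hx
    obtain ⟨r', hr', u', hu', rfl⟩ := hy
    exact ⟨r * r' + u * u' * b ^ 2, add_mem (mul_mem hr hr') (mul_mem (mul_mem hu hu') hb),
      r * u' + u * r', add_mem (mul_mem hr hu') (mul_mem hu hr'), by ring⟩

lemma eq_zero_of_mem_adjoin_range_of_map_eq_zero {B κ : Type*} [CommRing B] [Algebra R B]
    {x : κ → A} (φ : A →ₐ[R] B) (hx : AlgebraicIndependent R (φ ∘ x)) {f : A}
    (hf : f ∈ Algebra.adjoin R (Set.range x)) (hφ : φ f = 0) : f = 0 := by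
  rw [Algebra.adjoin_range_eq_range_aeval, AlgHom.mem_range] at hf
  obtain ⟨P, rfl⟩ := hf
  have hP : aeval (φ ∘ x) P = 0 := (comp_aeval_apply x φ P).symm.trans hφ
  rw [hx.eq_zero_of_aeval_eq_zero P hP, map_zero]

lemma saturation_powers_le {B : Subalgebra R A} {t : A} (ht : t ∈ B)
    (hB : ∀ g, t * g ∈ B → g ∈ B) :
    B.saturation (Submonoid.powers t) (Submonoid.powers_le.2 ht) ≤ B := by
  rintro f ⟨_, ⟨m, rfl⟩, hf⟩
  induction m with
  | zero => simpa using hf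
  | succ m ih =>
    refine ih (hB _ ?_)
    simpa [pow_succ', mul_assoc] using hf

end Adjoin

section SmulHom

variable {R E M : Type*} [CommRing R] [AddCommGroup E] [AddCommGroup M] [Module R M]

/-- The additive map `c ↦ ι c • x`, which turns parameters of a translation into multiples of a
fixed element. -/
def smulHom (ι : E →+ R) (x : M) : E →+ M :=
  (LinearMap.toSpanSingleton R M x).toAddMonoidHom.comp ι

@[simp] lemma smulHom_apply (ι : E →+ R) (x : M) (c : E) : smulHom ι x c = ι c • x := rfl

lemma smulHom_injective [IsDomain R] [Module.IsTorsionFree R M] {ι : E →+ R}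
    (hι : Function.Injective ι) {x : M} (hx : x ≠ 0) : Function.Injective (smulHom ι x) :=
  (smul_left_injective R hx).comp hι

end SmulHom

section Shear

variable {R E : Type*} [CommRing R]

/-- The shear `a₀ ↦ a₀`, `a₁ ↦ a₁ + c a₀`, `a₂ ↦ a₂ + 2c a₁ + c² a₀`. Over a field it is `σP`. -/
noncomputable def symSqShear (c : R) : MvPolynomial (Fin 3) R →ₐ[R] MvPolynomial (Fin 3) R :=
  aeval ![X 0, X 1 + C c * X 0, X 2 + C (2 * c) * X 1 + C (c ^ 2) * X 0]

@[simp] lemma symSqShear_X_zero (c : R) : symSqShear c (X 0) = X 0 := by simp [symSqShear]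

@[simp] lemma symSqShear_X_one (c : R) : symSqShear c (X 1) = X 1 + C c * X 0 := by
  simp [symSqShear]

@[simp] lemma symSqShear_X_two (c : R) :
    symSqShear c (X 2) = X 2 + C (2 * c) * X 1 + C (c ^ 2) * X 0 := by
  simp [symSqShear]

lemma symSqShear_comp_symSqShear (c d : R) :
    (symSqShear d).comp (symSqShear c) = symSqShear (d + c) := by
  ext i : 1
  fin_cases i <;> simp [add_sq] <;> ring

variable (R) in
/-- A quarter of the discriminant of the binary quadratic form `a₀ x² + 2 a₁ x y + a₂ y²`. -/
noncomputable def discr : MvPolynomial (Fin 3) R := X 1 ^ 2 - X 0 * X 2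

@[simp] lemma symSqShear_discr (c : R) : symSqShear c (discr R) = discr R := by
  simp only [discr, map_sub, map_mul, map_pow, symSqShear_X_zero, symSqShear_X_one,
    symSqShear_X_two, map_ofNat]
  ring

lemma X_zero_mul_symSqShear_X_two (c : R) :
    X 0 * symSqShear c (X 2) = (X 1 + c • X 0) ^ 2 - discr R := by
  simp only [symSqShear_X_two, discr, smul_eq_C_mul, map_mul, map_pow, map_ofNat]
  ring

variable (R) in
/-- The involution `a₁ ↦ -a₁`. -/
noncomputable def negX₁ : MvPolynomial (Fin 3) R →ₐ[R] MvPolynomial (Fin 3) R :=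
  aeval ![X 0, -X 1, X 2]

lemma negX₁_symSqShear_X_two (c : R) : negX₁ R (symSqShear c (X 2)) = symSqShear (-c) (X 2) := by
  simp [negX₁]

open scoped Polynomial in
variable (R) in
/-- Reduction modulo `a₀`, with values in polynomials in `a₂` over polynomials in `a₁`. -/
noncomputable def modX₀ : MvPolynomial (Fin 3) R →ₐ[R] R[X][X] :=
  aeval ![0, Polynomial.C Polynomial.X, Polynomial.X]

lemma modX₀_X_zero : modX₀ R (X 0) = 0 := by simp [modX₀]

lemma modX₀_discr : modX₀ R (discr R) = Polynomial.C (Polynomial.X ^ 2) := by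
  simp [modX₀, discr]

variable [AddCommGroup E] [Fintype E]

/-- The product of the images of `f` under the shears with parameters `ι c`; `β` and `γ₀` are the
orbit norms of `a₁` and `a₂`. -/
noncomputable def orbitNorm (ι : E →+ R) (f : MvPolynomial (Fin 3) R) : MvPolynomial (Fin 3) R :=
  ∏ c, symSqShear (ι c) f

lemma symSqShear_orbitNorm (ι : E →+ R) (c : E) (f : MvPolynomial (Fin 3) R) :
    symSqShear (ι c) (orbitNorm ι f) = orbitNorm ι f := by
  rw [orbitNorm, map_prod]
  refine Fintype.prod_equiv (Equiv.addLeft c) _ _ fun d => ?_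
  rw [← AlgHom.comp_apply, symSqShear_comp_symSqShear, ← map_add, Equiv.coe_addLeft]

lemma orbitNorm_X_one (ι : E →+ R) :
    orbitNorm ι (X 1) = ∏ c, (X 1 + smulHom ι (X 0) c) := by
  simp [orbitNorm, smul_eq_C_mul]

lemma negX₁_orbitNorm_X_two (ι : E →+ R) : negX₁ R (orbitNorm ι (X 2)) = orbitNorm ι (X 2) := by
  rw [orbitNorm, map_prod]
  exact Fintype.prod_equiv (Equiv.neg E) _ _ fun c => by
    rw [negX₁_symSqShear_X_two, Equiv.neg_apply, map_neg]

lemma negX₁_eq_self_of_mem_adjoin {ι : E →+ R} {f : MvPolynomial (Fin 3) R}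
    (hf : f ∈ Algebra.adjoin R {X 0, discr R, orbitNorm ι (X 2)}) : negX₁ R f = f := by
  have hle : Algebra.adjoin R {X 0, discr R, orbitNorm ι (X 2)} ≤
      AlgHom.equalizer (negX₁ R) (AlgHom.id R _) := by
    rw [Algebra.adjoin_le_iff]
    rintro _ (rfl | rfl | rfl)
    · simp [negX₁]
    · simp [negX₁, discr]
    · simp [negX₁_orbitNorm_X_two]
  exact hle hf

lemma modX₀_orbitNorm_X_one (ι : E →+ R) :
    modX₀ R (orbitNorm ι (X 1)) = Polynomial.C (Polynomial.X ^ Fintype.card E) := by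
  simp [modX₀, orbitNorm, map_prod]

lemma modX₀_orbitNorm_X_two (ι : E →+ R) :
    modX₀ R (orbitNorm ι (X 2)) =
      ∏ c, (Polynomial.X + Polynomial.C (Polynomial.C (2 * ι c) * Polynomial.X)) := by
  simp [modX₀, orbitNorm, map_prod,
    IsScalarTower.algebraMap_apply R (Polynomial R) (Polynomial (Polynomial R))]

lemma symSqShear_eq_self_of_mem_adjoin (ι : E →+ R) {f : MvPolynomial (Fin 3) R}
    (hf : f ∈ Algebra.adjoin R {X 0, discr R, orbitNorm ι (X 1), orbitNorm ι (X 2)}) (c : E) :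
    symSqShear (ι c) f = f := by
  have hle : Algebra.adjoin R {X 0, discr R, orbitNorm ι (X 1), orbitNorm ι (X 2)} ≤
      AlgHom.equalizer (symSqShear (ι c)) (AlgHom.id R _) := by
    rw [Algebra.adjoin_le_iff]
    rintro _ (rfl | rfl | rfl | rfl) <;> simp [symSqShear_orbitNorm]
  exact hle hf

end Shear

section Domain

variable {R E : Type*} [CommRing R] [IsDomain R] [AddCommGroup E] [Fintype E] {ι : E →+ R}

lemma orbitNorm_X_one_sq (hι : Function.Injective ι) :
    orbitNorm ι (X 1) ^ 2 =
      ∏ c, (discr R - (ι c • X 0) ^ 2) + X 0 ^ Fintype.card E * orbitNorm ι (X 2) := by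
  have hprod := prod_add_sq_sub (smulHom_injective hι (X_ne_zero (R := R) (0 : Fin 3)))
    (X 1) (discr R)
  simp only [smulHom_apply, ← X_zero_mul_symSqShear_X_two, Finset.prod_mul_distrib,
    Finset.prod_const, Finset.card_univ] at hprod
  rw [orbitNorm_X_one, orbitNorm]
  simp only [smulHom_apply]
  linear_combination -hprod

lemma orbitNorm_X_one_sq_mem_adjoin (hι : Function.Injective ι) :
    orbitNorm ι (X 1) ^ 2 ∈ Algebra.adjoin R {X 0, discr R, orbitNorm ι (X 2)} := by
  have mem {g} (hg : g ∈ ({X 0, discr R, orbitNorm ι (X 2)} : Set (MvPolynomial (Fin 3) R))) :=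
    Algebra.subset_adjoin (R := R) hg
  rw [orbitNorm_X_one_sq hι]
  refine add_mem (prod_mem fun c _ => sub_mem (mem (by simp)) (pow_mem ?_ 2))
    (mul_mem (pow_mem (mem (by simp)) _) (mem (by simp)))
  exact Subalgebra.smul_mem _ (mem (by simp)) _

lemma negX₁_orbitNorm_X_one (hι : Function.Injective ι) :
    negX₁ R (orbitNorm ι (X 1)) = -orbitNorm ι (X 1) := by
  have hneg := eval_orbitPoly_neg (smulHom_injective hι (X_ne_zero (R := R) (0 : Fin 3))) (X 1)
  rw [eval_orbitPoly, eval_orbitPoly, ← orbitNorm_X_one] at hneg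
  rw [← hneg, orbitNorm_X_one, map_prod]
  simp [negX₁, smul_eq_C_mul]

lemma algebraicIndependent_modX₀ (ι : E →+ R) :
    AlgebraicIndependent R (modX₀ R ∘ ![discr R, orbitNorm ι (X 2)]) := by
  have hΔ : AlgebraicIndependent R fun _ : Unit => (Polynomial.X ^ 2 : Polynomial R) := by
    rw [algebraicIndependent_unique_type_iff]
    exact Polynomial.transcendental _ (by simp) (by simp)
  have hγ : AlgebraicIndependent (Polynomial R) fun _ : Unit => modX₀ R (orbitNorm ι (X 2)) := by
    rw [algebraicIndependent_unique_type_iff, modX₀_orbitNorm_X_two]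
    refine Polynomial.transcendental _ ?_ ?_
    · rw [Polynomial.natDegree_prod_of_monic _ _ fun _ _ => Polynomial.monic_X_add_C _]
      simp only [Polynomial.natDegree_X_add_C, Finset.sum_const, Finset.card_univ, smul_eq_mul,
        mul_one]
      exact Fintype.card_ne_zero
    · rw [(Polynomial.monic_prod_of_monic _ _ fun _ _ => Polynomial.monic_X_add_C _).leadingCoeff]
      exact one_mem _
  have hindep := (hΔ.sumElim_comp hγ).comp (![Sum.inr (), Sum.inl ()] : Fin 2 → Unit ⊕ Unit)
    (by decide)
  convert! hindep using 1
  funext i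
  fin_cases i <;> simp [modX₀_discr]

lemma exists_eq_X_zero_mul {f : MvPolynomial (Fin 3) R}
    (hf : f ∈ Algebra.adjoin R {X 0, discr R, orbitNorm ι (X 2)}) (hmod : modX₀ R f = 0) :
    ∃ g ∈ Algebra.adjoin R {X 0, discr R, orbitNorm ι (X 2)}, f = X 0 * g := by
  obtain ⟨g, hg, r, hr, rfl⟩ := exists_eq_mul_add_of_mem_adjoin_insert hf
  rw [map_add, map_mul, modX₀_X_zero, zero_mul, zero_add] at hmod
  rw [← Matrix.range_cons_cons_empty _ _ ![]] at hr
  have hr0 := eq_zero_of_mem_adjoin_range_of_map_eq_zero _ (algebraicIndependent_modX₀ ι) hr hmod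
  exact ⟨g, hg, by rw [hr0, add_zero]⟩

lemma modX₀_eq_zero_of_X_zero_mul_eq (h2 : (2 : R) ≠ 0) (hι : Function.Injective ι)
    {g r u : MvPolynomial (Fin 3) R} (hr : r ∈ Algebra.adjoin R {X 0, discr R, orbitNorm ι (X 2)})
    (hu : u ∈ Algebra.adjoin R {X 0, discr R, orbitNorm ι (X 2)})
    (hg : X 0 * g = r + u * orbitNorm ι (X 1)) : modX₀ R r = 0 ∧ modX₀ R u = 0 := by
  have hneg : X 0 * negX₁ R g = r - u * orbitNorm ι (X 1) := by
    have h := congrArg (negX₁ R) hg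
    rw [map_mul, map_add, map_mul, negX₁_orbitNorm_X_one hι, negX₁_eq_self_of_mem_adjoin hr,
      negX₁_eq_self_of_mem_adjoin hu] at h
    simpa [negX₁, sub_eq_add_neg] using h
  have hadd := congrArg (modX₀ R) hg
  have hsub := congrArg (modX₀ R) hneg
  rw [map_mul, modX₀_X_zero, zero_mul, map_add, map_mul] at hadd
  rw [map_mul, modX₀_X_zero, zero_mul, map_sub, map_mul] at hsub
  have hr0 : modX₀ R r = 0 := by
    have h2' : (2 : Polynomial (Polynomial R)) ≠ 0 := fun h0 =>
      h2 (Polynomial.C_injective (Polynomial.C_injective (by simpa only [map_ofNat, map_zero])))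
    have h2r : 2 * modX₀ R r = 0 := by linear_combination -hadd - hsub
    exact (mul_eq_zero.1 h2r).resolve_left h2'
  rw [hr0, zero_add, modX₀_orbitNorm_X_one] at hadd
  exact ⟨hr0, (mul_eq_zero.1 hadd.symm).resolve_right (by simp)⟩

lemma mem_adjoin_of_X_zero_mul_mem (h2 : (2 : R) ≠ 0) (hι : Function.Injective ι)
    {g : MvPolynomial (Fin 3) R}
    (hg : X 0 * g ∈ Algebra.adjoin R
      (insert (orbitNorm ι (X 1)) {X 0, discr R, orbitNorm ι (X 2)})) :
    g ∈ Algebra.adjoin R (insert (orbitNorm ι (X 1)) {X 0, discr R, orbitNorm ι (X 2)}) := by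
  obtain ⟨r, hr, u, hu, h⟩ :=
    exists_eq_add_mul_of_mem_adjoin_insert_of_sq_mem (orbitNorm_X_one_sq_mem_adjoin hι) hg
  obtain ⟨hr0, hu0⟩ := modX₀_eq_zero_of_X_zero_mul_eq h2 hι hr hu h
  obtain ⟨r', hr', rfl⟩ := exists_eq_X_zero_mul hr hr0
  obtain ⟨u', hu', rfl⟩ := exists_eq_X_zero_mul hu hu0
  have hgr : g = r' + u' * orbitNorm ι (X 1) :=
    mul_left_cancel₀ (X_ne_zero 0) (by linear_combination h)
  have hle := Algebra.adjoin_mono (R := R)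
    (Set.subset_insert (orbitNorm ι (X 1)) {X 0, discr R, orbitNorm ι (X 2)})
  rw [hgr]
  exact add_mem (hle hr') (mul_mem (hle hu') (Algebra.subset_adjoin (Set.mem_insert _ _)))

variable (R) in
lemma algebraicIndependent_X_zero_X_one_discr :
    AlgebraicIndependent R (![X 0, X 1, discr R] : Fin 3 → MvPolynomial (Fin 3) R) := by
  let K := FractionRing (MvPolynomial (Fin 3) R)
  let x : Fin 3 → K := algebraMap (MvPolynomial (Fin 3) R) K ∘ X
  let ψ : MvPolynomial (Fin 3) R →ₐ[R] K := aeval ![x 0, x 1, (x 1 ^ 2 - x 2) / x 0]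
  have hx : AlgebraicIndependent R x := (algebraicIndependent_X (Fin 3) R).map'
    (f := IsScalarTower.toAlgHom R (MvPolynomial (Fin 3) R) K) (IsFractionRing.injective _ K)
  have hψ : ψ ∘ ![X 0, X 1, discr R] = x := by
    have hx0 : x 0 ≠ 0 := hx.ne_zero 0
    funext i
    fin_cases i
    · simp [ψ]
    · simp [ψ]
    · simp [ψ, discr, mul_div_cancel₀ _ hx0]
  exact AlgebraicIndependent.of_comp ψ (hψ ▸ hx)

variable (R) in
lemma transcendental_adjoin_X_one :
    Transcendental (Algebra.adjoin R {X 0, discr R}) (X 1 : MvPolynomial (Fin 3) R) := by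
  have h := (algebraicIndependent_X_zero_X_one_discr R).transcendental_adjoin
    (s := {0, 2}) (i := 1) (by decide)
  rw [Set.image_pair] at h
  exact h

lemma mem_adjoin_orbitNorm_X_one (hι : Function.Injective ι) {f : MvPolynomial (Fin 3) R}
    (hf : f ∈ Algebra.adjoin R {X 0, discr R, X 1}) (hinv : ∀ c, symSqShear (ι c) f = f) :
    f ∈ Algebra.adjoin R {X 0, discr R, orbitNorm ι (X 1)} := by
  have hset (g : MvPolynomial (Fin 3) R) : ({X 0, discr R, g} : Set _) = {X 0, discr R} ∪ {g} := by
    rw [Set.insert_union, Set.singleton_union]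
  let B := Algebra.adjoin R {X 0, discr R}
  let x₀ : B := ⟨X 0, Algebra.subset_adjoin (by simp)⟩
  have hx₀ : x₀ ≠ 0 := Subtype.coe_ne_coe.1 (X_ne_zero 0)
  have hfix (c : E) : B ≤ AlgHom.equalizer (symSqShear (ι c)) (AlgHom.id R _) := by
    rw [Algebra.adjoin_le_iff]
    rintro _ (rfl | rfl) <;> simp
  let σ (c : E) : MvPolynomial (Fin 3) R →ₐ[B] MvPolynomial (Fin 3) R :=
    { symSqShear (ι c) with commutes' := fun b => hfix c b.2 }
  rw [hset, Algebra.adjoin_union_eq_adjoin_adjoin] at hf ⊢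
  rw [orbitNorm_X_one]
  exact mem_adjoin_orbit_prod (transcendental_adjoin_X_one R) (smulHom_injective hι hx₀) σ
    (fun c => (symSqShear_X_one _).trans (congrArg _ (smul_eq_C_mul _ _).symm)) hf hinv

variable (R) in
lemma saturation_adjoin_X_zero_discr_X_one :
    (Algebra.adjoin R {X 0, discr R, X 1}).saturation (Submonoid.powers (X 0))
      (Submonoid.powers_le.2 (Algebra.subset_adjoin (by simp))) = ⊤ := by
  have mem {g : MvPolynomial (Fin 3) R} (hg : g ∈ ({X 0, discr R, X 1} : Set _)) :
      g ∈ Algebra.adjoin R {X 0, discr R, X 1} := Algebra.subset_adjoin hg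
  have hX2 : X 0 * X 2 ∈ Algebra.adjoin R {X 0, discr R, X 1} := by
    rw [← sub_sub_cancel (X 1 ^ 2) (X 0 * X 2)]
    exact sub_mem (pow_mem (mem (by simp)) 2) (mem (g := discr R) (by simp))
  rw [eq_top_iff, ← adjoin_range_X, Algebra.adjoin_le_iff, Set.range_subset_iff]
  intro i
  fin_cases i
  · exact Subalgebra.le_saturation (mem (by simp))
  · exact Subalgebra.le_saturation (mem (by simp))
  · exact ⟨X 0, Submonoid.mem_powers _, hX2⟩

end Domain

theorem P_invariants_generated_general {R E : Type*} [CommRing R] [IsDomain R] (h2 : (2 : R) ≠ 0)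
    [AddCommGroup E] [Fintype E] {ι : E →+ R} (hι : Function.Injective ι) :
    {f | ∀ c, symSqShear (ι c) f = f} =
      (Algebra.adjoin R {X 0, discr R, orbitNorm ι (X 1), orbitNorm ι (X 2)} :
        Set (MvPolynomial (Fin 3) R)) := by
  refine Set.Subset.antisymm (fun f hf => ?_) fun f hf => symSqShear_eq_self_of_mem_adjoin ι hf
  obtain ⟨_, ⟨m, rfl⟩, hm⟩ : f ∈ (Algebra.adjoin R {X 0, discr R, X 1}).saturation
      (Submonoid.powers (X 0)) _ := saturation_adjoin_X_zero_discr_X_one R ▸ Algebra.mem_top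
  have hinv : X 0 ^ m * f ∈ Algebra.adjoin R {X 0, discr R, orbitNorm ι (X 1)} :=
    mem_adjoin_orbitNorm_X_one hι hm fun c => by
      rw [map_mul, map_pow, symSqShear_X_zero, hf c]
  have hset : ({X 0, discr R, orbitNorm ι (X 1), orbitNorm ι (X 2)} : Set _) =
      insert (orbitNorm ι (X 1)) {X 0, discr R, orbitNorm ι (X 2)} := by
    rw [Set.insert_comm (discr R), Set.insert_comm (X 0)]
  have hX0 : X 0 ∈ Algebra.adjoin R {X 0, discr R, orbitNorm ι (X 1), orbitNorm ι (X 2)} :=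
    Algebra.subset_adjoin (by simp)
  refine saturation_powers_le hX0 (fun g hg => ?_) ⟨_, ⟨m, rfl⟩, ?_⟩
  · rw [hset] at hg ⊢
    exact mem_adjoin_of_X_zero_mul_mem h2 hι hg
  · refine Algebra.adjoin_mono ?_ hinv
    rw [Set.insert_subset_iff, Set.insert_subset_iff, Set.singleton_subset_iff]
    simp

/-- The ring of `P`-invariants is generated by `a0`, `Δ`, `β`, `γ₀`:
`F[V]^P = F[a0, Δ, β, γ₀]`. -/
theorem P_invariants_generated (F : Type*) [Field F] (p n q : ℕ) (hp : p.Prime) (hp2 : p ≠ 2)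
    [CharP F p] (hn : n ≠ 0) (hq : q = p ^ n)
    (Fq : Type*) [Field Fq] [Fintype Fq] [Algebra Fq F] (hcard : Fintype.card Fq = q)
    (Δ β γ₀ : MvPolynomial (Fin 3) F)
    (hΔ : Δ = X 1 ^ 2 - X 0 * X 2)
    (hβ : β = ∏ c : Fq, (X 1 + C (algebraMap Fq F c) * X 0))
    (hγ : γ₀ = ∏ c : Fq,
      (X 2 + C (2 * algebraMap Fq F c) * X 1 + C ((algebraMap Fq F c) ^ 2) * X 0)) :
    {f : MvPolynomial (Fin 3) F | ∀ c : Fq, σP F (algebraMap Fq F c) f = f} =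
      ((Algebra.adjoin F {(X 0 : MvPolynomial (Fin 3) F), Δ, β, γ₀} :
        Subalgebra F (MvPolynomial (Fin 3) F)) : Set (MvPolynomial (Fin 3) F)) := by
  have h2 : (2 : F) ≠ 0 := Ring.two_ne_zero (by rwa [ringChar.eq F p])
  subst hΔ hβ hγ
  have h := P_invariants_generated_general h2 (ι := (algebraMap Fq F).toAddMonoidHom)
    (algebraMap Fq F).injective
  simp only [orbitNorm, symSqShear_X_one, symSqShear_X_two] at h
  exact h
end

section
/- The polynomial J = a0·γ_0 is SL_2(F_q)-invariant: σ_c(J) = J for all c ∈ F_q and τ(J) = J. -/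
open MvPolynomial
open scoped Classical

/-!
`J` is the product of the quadratic form `a2·s² + 2·a1·s·t + a0·t²` over representatives `(s, t)`
of the points of the projective line over `F_q`. Both `σ_c` and `τ` act through a linear
substitution in `(s, t)`, so they permute the factors up to the scalars that relate representatives
of the same point. The scalars for `τ` are squares of nonzero elements, and their product is `1` by
Wilson's theorem.
-/

lemma prod_eq_zero_mul_prod_units {G₀ M : Type*} [GroupWithZero G₀] [Fintype G₀] [CommMonoid M]
    (f : G₀ → M) : ∏ t, f t = f 0 * ∏ u : G₀ˣ, f u := by
  rw [Fintype.prod_eq_mul_prod_subtype_ne f 0,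
    Fintype.prod_equiv unitsEquivNeZero (fun u : G₀ˣ ↦ f u) (fun t ↦ f t) fun _ ↦ rfl]

section ProjectiveLine

variable {K M : Type*} [Field K] [Fintype K] [CommMonoid M]

/-- The product of `f` over the points of the projective line over `K`, which are represented by
`(0, 1)` and the `(1, t)` with `t ∈ K`. As `f` takes representatives, the value depends on this
choice unless `f` is invariant under scaling. -/
def projLineProd (f : K → K → M) : M :=
  f 0 1 * ∏ t, f 1 t

lemma map_projLineProd {N G : Type*} [CommMonoid N] [FunLike G M N] [MonoidHomClass G M N]
    (g : G) (f : K → K → M) : g (projLineProd f) = projLineProd fun s t ↦ g (f s t) := by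
  simp only [projLineProd, map_mul, map_prod]

lemma projLineProd_shear (f : K → K → M) (c : K) :
    projLineProd (fun s t ↦ f s (t + c * s)) = projLineProd f := by
  simp only [projLineProd, mul_zero, add_zero, mul_one]
  rw [Fintype.prod_equiv (Equiv.addRight c) (fun t ↦ f 1 (t + c)) (f 1) fun _ ↦ rfl]

lemma projLineProd_rotate {f : K → K → M} {χ : Kˣ →* M} (hχ : χ (-1) = 1)
    (hf : ∀ (u : Kˣ) (s t : K), f (u * s) (u * t) = χ u * f s t) :
    projLineProd (fun s t ↦ f t (-s)) = projLineProd f := by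
  have f_zero_neg_one : f 0 (-1) = f 0 1 := by
    simpa [hχ] using hf (-1) 0 1
  have f_unit_neg_one (u : Kˣ) : f u (-1) = χ u * f 1 ↑(-u⁻¹) := by
    simpa using hf u 1 ↑(-u⁻¹)
  have prod_χ : ∏ u, χ u = 1 := by
    rw [← map_prod, FiniteField.prod_univ_units_id_eq_neg_one, hχ]
  have prod_neg_inv : ∏ u : Kˣ, f 1 ↑(-u⁻¹) = ∏ u : Kˣ, f 1 u :=
    Fintype.prod_equiv ((Equiv.inv Kˣ).trans (Equiv.neg Kˣ)) _ _ fun _ ↦ rfl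
  calc projLineProd (fun s t ↦ f t (-s))
      = f 1 0 * (f 0 (-1) * ∏ u : Kˣ, f u (-1)) := by
        simp only [projLineProd, neg_zero, prod_eq_zero_mul_prod_units fun t ↦ f t (-1)]
    _ = f 1 0 * (f 0 1 * ∏ u : Kˣ, f 1 u) := by
        simp only [f_zero_neg_one, f_unit_neg_one, Finset.prod_mul_distrib, prod_neg_inv, prod_χ,
          one_mul]
    _ = projLineProd f := by
        rw [projLineProd, prod_eq_zero_mul_prod_units (f 1), mul_left_comm]

end ProjectiveLine

/-- The generic binary quadratic form `a2·s² + 2·a1·s·t + a0·t²`, evaluated at `(s, t)`: its values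
are the factors of `J`. -/
noncomputable def genericForm {R : Type*} [CommSemiring R] (s t : R) : MvPolynomial (Fin 3) R :=
  C (s ^ 2) * X 2 + C (2 * s * t) * X 1 + C (t ^ 2) * X 0

lemma genericForm_mul_mul {R : Type*} [CommSemiring R] (u s t : R) :
    genericForm (u * s) (u * t) = C u ^ 2 * genericForm s t := by
  simp only [genericForm, map_mul, map_pow]
  ring

lemma σP_genericForm {F : Type*} [Field F] (c s t : F) :
    σP F c (genericForm s t) = genericForm s (t + c * s) := by
  simp only [σP, genericForm, map_add, map_mul, map_pow, map_ofNat, aeval_X, aeval_C,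
    algebraMap_eq, Matrix.cons_val]
  ring

lemma τA_genericForm {F : Type*} [Field F] (s t : F) :
    τA F (genericForm s t) = genericForm t (-s) := by
  simp only [τA, genericForm, map_mul, map_add, map_pow, map_neg, map_ofNat, aeval_X, aeval_C,
    algebraMap_eq, Matrix.cons_val]
  ring

/-- The product of the values of `genericForm` over the `K`-points of the projective line; this is
the polynomial `J` when `K = F_q`. -/
noncomputable def genericFormProd (K R : Type*) [Field K] [Fintype K] [CommSemiring R]
    [Algebra K R] : MvPolynomial (Fin 3) R :=
  projLineProd fun s t : K ↦ genericForm (algebraMap K R s) (algebraMap K R t)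

lemma genericFormProd_eq_X_zero_mul_prod (K R : Type*) [Field K] [Fintype K] [CommSemiring R]
    [Algebra K R] :
    genericFormProd K R = X 0 * ∏ c : K,
      (X 2 + C (2 * algebraMap K R c) * X 1 + C (algebraMap K R c ^ 2) * X 0) := by
  simp [genericFormProd, projLineProd, genericForm]

lemma σP_genericFormProd {K F : Type*} [Field K] [Fintype K] [Field F] [Algebra K F] (c : K) :
    σP F (algebraMap K F c) (genericFormProd K F) = genericFormProd K F := by
  simp only [genericFormProd, map_projLineProd, σP_genericForm, ← map_mul, ← map_add]
  exact projLineProd_shear (fun s t ↦ genericForm (algebraMap K F s) (algebraMap K F t)) c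

lemma τA_genericFormProd (K F : Type*) [Field K] [Fintype K] [Field F] [Algebra K F] :
    τA F (genericFormProd K F) = genericFormProd K F := by
  let χ : Kˣ →* MvPolynomial (Fin 3) F :=
    ((C.comp (algebraMap K F)).toMonoidHom.comp (Units.coeHom K)) ^ 2
  have χ_apply (u : Kˣ) : χ u = C (algebraMap K F u) ^ 2 := rfl
  have χ_neg_one : χ (-1) = 1 := by
    rw [χ_apply, Units.val_neg, Units.val_one, map_neg, map_neg, map_one, map_one, neg_one_sq]
  simp only [genericFormProd, map_projLineProd, τA_genericForm, ← map_neg]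
  refine projLineProd_rotate
    (f := fun s t ↦ genericForm (algebraMap K F s) (algebraMap K F t)) χ_neg_one fun u s t ↦ ?_
  rw [map_mul, map_mul, genericForm_mul_mul, χ_apply]

theorem J_invariant_general (F : Type*) [Field F] (Fq : Type*) [Field Fq] [Fintype Fq]
    [Algebra Fq F] (γ₀ J : MvPolynomial (Fin 3) F)
    (hγ : γ₀ = ∏ c : Fq,
      (X 2 + C (2 * algebraMap Fq F c) * X 1 + C ((algebraMap Fq F c) ^ 2) * X 0))
    (hJ : J = X 0 * γ₀) :
    (∀ c : Fq, σP F (algebraMap Fq F c) J = J) ∧ τA F J = J := by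
  rw [hJ, hγ, ← genericFormProd_eq_X_zero_mul_prod]
  exact ⟨σP_genericFormProd, τA_genericFormProd Fq F⟩

/-- `J = a0·γ₀` is `SL₂(F_q)`-invariant: it is fixed by every `σ_c` and by `τ`. -/
theorem J_invariant (F : Type*) [Field F] (p n q : ℕ) (hp : p.Prime) (hp2 : p ≠ 2)
    [CharP F p] (hn : n ≠ 0) (hq : q = p ^ n)
    (Fq : Type*) [Field Fq] [Fintype Fq] [Algebra Fq F] (hcard : Fintype.card Fq = q)
    (γ₀ J : MvPolynomial (Fin 3) F)
    (hγ : γ₀ = ∏ c : Fq,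
      (X 2 + C (2 * algebraMap Fq F c) * X 1 + C ((algebraMap Fq F c) ^ 2) * X 0))
    (hJ : J = X 0 * γ₀) :
    (∀ c : Fq, σP F (algebraMap Fq F c) J = J) ∧ τA F J = J :=
  J_invariant_general F Fq γ₀ J hγ hJ
end

section
/- Every SL_2(F_q)-invariant polynomial f ∈ F[V] all of whose monomials have odd weight (i.e., each monomial a0^{e0} a1^{e1} a2^{e2} of f has e1 + 2e2 odd) is divisible by B in F[V]^{SL_2(F_q)}. -/
open MvPolynomial
open scoped Classical

/-!
A linear form `a * X 2 + b * X 1 + c * X 0` is encoded by the binary quadratic form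
`a * T ^ 2 + b * T + c`: the substitution `σ_t` becomes `T ↦ T + t` and `τ` becomes `T ↦ -1 / T`, so
both preserve the discriminant. Up to scalars the linear factors of `B` are exactly the forms whose
discriminant is a nonzero square, that is, those with two distinct roots on the projective line
over `F_q`. Since `SL₂(F_q)` permutes these forms transitively up to scalars and `X 1` (with roots
`0` and `∞`) is one of them, an invariant divisible by `X 1` is divisible by all of them, hence by
`B`. Odd weight forces divisibility by `X 1`.
-/

section Weight

variable {σ R : Type*} [CommSemiring R]

theorem X_dvd_of_forall_mem_support {i : σ} {f : MvPolynomial σ R}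
    (h : ∀ m ∈ f.support, m i ≠ 0) : X i ∣ f := by
  rw [f.as_sum]
  exact Finset.dvd_sum fun m hm => X_dvd_monomial.mpr (Or.inr (h m hm))

theorem X_one_dvd_of_odd_weight {f : MvPolynomial (Fin 3) R}
    (hodd : ∀ m ∈ f.support, Odd (m 1 + 2 * m 2)) : X 1 ∣ f := by
  refine X_dvd_of_forall_mem_support fun m hm h => ?_
  have := hodd m hm
  grind

end Weight

section LinearForm

variable (F : Type*) {K : Type*} [Field F]

/-- The linear form on `V` attached to the binary quadratic form `a * T ^ 2 + b * T + c` over a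
coefficient ring `K` of `F`. The leading coefficient `a` goes with `X 2`, so that the arguments are
those of `discrim`. -/
noncomputable def linForm [CommRing K] [Algebra K F] (a b c : K) : MvPolynomial (Fin 3) F :=
  C (algebraMap K F a) * X 2 + C (algebraMap K F b) * X 1 + C (algebraMap K F c) * X 0

section CommRing

variable [CommRing K] [Algebra K F] (a b c t u : K)

theorem σP_linForm : σP F (algebraMap K F t) (linForm F a b c) =
    linForm F a (b + 2 * a * t) (c + b * t + a * t ^ 2) := by
  simp only [σP, linForm, map_add, map_mul, map_pow, map_ofNat, algHom_C, algebraMap_eq, aeval_X,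
    Matrix.cons_val]
  ring

theorem τA_linForm : τA F (linForm F a b c) = linForm F c (-b) a := by
  simp only [τA, linForm, map_add, map_mul, map_neg, algHom_C, algebraMap_eq, aeval_X,
    Matrix.cons_val]
  ring

theorem linForm_mul :
    linForm F (u * a) (u * b) (u * c) = C (algebraMap K F u) * linForm F a b c := by
  simp only [linForm, map_mul]
  ring

theorem isHomogeneous_linForm : (linForm F a b c).IsHomogeneous 1 :=
  ((isHomogeneous_C_mul_X _ _).add (isHomogeneous_C_mul_X _ _)).add (isHomogeneous_C_mul_X _ _)

theorem eval_linForm (v : Fin 3 → F) : eval v (linForm F a b c) =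
    algebraMap K F a * v 2 + algebraMap K F b * v 1 + algebraMap K F c * v 0 := by
  simp [linForm]

end CommRing

variable {F} [Field K] [Algebra K F] {a b c a' b' c' u : K} {f : MvPolynomial (Fin 3) F}

theorem linForm_mul_dvd_iff (hu : u ≠ 0) :
    linForm F (u * a) (u * b) (u * c) ∣ f ↔ linForm F a b c ∣ f := by
  have hunit : IsUnit (C (algebraMap K F u) : MvPolynomial (Fin 3) F) :=
    (hu.isUnit.map (algebraMap K F)).map C
  rw [linForm_mul, hunit.mul_left_dvd]

theorem linForm_zero_zero_dvd_iff_X_one_dvd (hb : b ≠ 0) : linForm F 0 b 0 ∣ f ↔ X 1 ∣ f := by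
  have h := linForm_mul_dvd_iff (a := 0) (b := 1) (c := 0) (f := f) hb
  simpa [linForm] using h

theorem linForm_eq_zero_iff : linForm F a b c = 0 ↔ a = 0 ∧ b = 0 ∧ c = 0 := by
  refine ⟨fun h => ?_, by rintro ⟨rfl, rfl, rfl⟩; simp [linForm]⟩
  have heval (v : Fin 3 → F) := (eval_linForm F a b c v).symm.trans (by rw [h, map_zero])
  exact ⟨by simpa using heval ![0, 0, 1], by simpa using heval ![0, 1, 0],
    by simpa using heval ![1, 0, 0]⟩

theorem irreducible_linForm (h : linForm F a b c ≠ 0) : Irreducible (linForm F a b c) := by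
  have hhom := isHomogeneous_linForm F a b c
  refine irreducible_of_totalDegree_eq_one (hhom.totalDegree h) fun x hx => ?_
  refine isUnit_iff_ne_zero.mpr ?_
  rintro rfl
  exact h (MvPolynomial.ext _ _ fun i => by simpa using hx i)

theorem proportional_of_linForm_dvd (h : linForm F a b c ∣ linForm F a' b' c') :
    a * b' = b * a' ∧ a * c' = c * a' ∧ b * c' = c * b' := by
  have heval (v : Fin 3 → K) (hv : a * v 2 + b * v 1 + c * v 0 = 0) :
      a' * v 2 + b' * v 1 + c' * v 0 = 0 := by
    have := map_dvd (eval (algebraMap K F ∘ v)) h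
    simp only [eval_linForm, Function.comp_apply, ← map_mul, ← map_add, hv, map_zero,
      zero_dvd_iff, map_eq_zero] at this
    exact this
  have hab := heval ![0, a, -b] (by simp; ring)
  have hac := heval ![a, 0, -c] (by simp; ring)
  have hbc := heval ![b, -c, 0] (by simp; ring)
  simp only [Matrix.cons_val] at hab hac hbc
  exact ⟨by linear_combination hab, by linear_combination hac, by linear_combination hbc⟩

theorem isRelPrime_linForm (h : ¬(a * b' = b * a' ∧ a * c' = c * a' ∧ b * c' = c * b')) :
    IsRelPrime (linForm F a b c) (linForm F a' b' c') := by
  have hne : linForm F a b c ≠ 0 := by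
    rw [Ne, linForm_eq_zero_iff]
    rintro ⟨rfl, rfl, rfl⟩
    simp at h
  exact (irreducible_linForm hne).isRelPrime_iff_not_dvd.mpr (mt proportional_of_linForm_dvd h)

end LinearForm

section Involution

variable {F : Type*} [Field F]

theorem algHom_ext_linForm {φ ψ : MvPolynomial (Fin 3) F →ₐ[F] MvPolynomial (Fin 3) F}
    (h : ∀ a b c : F, φ (linForm F a b c) = ψ (linForm F a b c)) : φ = ψ := by
  refine algHom_ext fun i => ?_
  fin_cases i
  · simpa [linForm] using h 0 0 1
  · simpa [linForm] using h 0 1 0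
  · simpa [linForm] using h 1 0 0

theorem τA_τA (f : MvPolynomial (Fin 3) F) : τA F (τA F f) = f := by
  have h : (τA F).comp (τA F) = AlgHom.id F _ :=
    algHom_ext_linForm fun a b c => by simp [τA_linForm]
  exact DFunLike.congr_fun h f

theorem σP_τA_braid (f : MvPolynomial (Fin 3) F) :
    σP F 1 (τA F (σP F 1 (τA F (σP F 1 f)))) = τA F f := by
  have hσ (a b c : F) : σP F 1 (linForm F a b c) = linForm F a (b + 2 * a) (c + b + a) := by
    simpa using σP_linForm F a b c 1
  have h : (σP F 1).comp ((τA F).comp ((σP F 1).comp ((τA F).comp (σP F 1)))) = τA F :=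
    algHom_ext_linForm fun a b c => by
      simp only [AlgHom.comp_apply, hσ, τA_linForm]
      congr 1 <;> ring
  exact DFunLike.congr_fun h f

theorem τA_eq_self_of_dvd {P : MvPolynomial (Fin 3) F} (hσ : σP F 1 P = P) (hP : P ∣ τA F P) :
    τA F P = P := by
  rcases eq_or_ne P 0 with rfl | hP0
  · exact map_zero _
  obtain ⟨u, hu⟩ := hP
  have hunit : IsUnit u := by
    have h := τA_τA P
    rw [hu, map_mul, hu, mul_assoc] at h
    exact .of_mul_eq_one _ ((mul_eq_left₀ hP0).mp h)
  obtain ⟨r, -, rfl⟩ := isUnit_iff_eq_C_of_isReduced.mp hunit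
  -- The braid relation contains two copies of `τ` on the left and one on the right.
  have hbraid : P * C r * C r = P * C r := by
    simpa only [hσ, hu, map_mul, algHom_C, algebraMap_eq] using σP_τA_braid P
  rw [hu, mul_right_cancel₀ hunit.ne_zero hbraid]

end Involution

section Invariant

variable {F : Type*} (K : Type*) [Field F] [CommRing K] [Algebra K F]

/-- Invariance of a polynomial on `V` under `SL₂(K)`, expressed on the generators `σ_t`, `t ∈ K`,
and `τ`. -/
structure IsSL2Invariant (f : MvPolynomial (Fin 3) F) : Prop where
  σP_eq (t : K) : σP F (algebraMap K F t) f = f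
  τA_eq : τA F f = f

namespace IsSL2Invariant

variable {K} {f g : MvPolynomial (Fin 3) F} {a b c : K}

theorem of_mul_left_cancel (hf : IsSL2Invariant K f) (hf0 : f ≠ 0)
    (hfg : IsSL2Invariant K (f * g)) : IsSL2Invariant K g where
  σP_eq t := mul_left_cancel₀ hf0 (by simpa only [map_mul, hf.σP_eq] using hfg.σP_eq t)
  τA_eq := mul_left_cancel₀ hf0 (by simpa only [map_mul, hf.τA_eq] using hfg.τA_eq)

theorem linForm_translate_dvd (hf : IsSL2Invariant K f) (h : linForm F a b c ∣ f) (t : K) :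
    linForm F a (b + 2 * a * t) (c + b * t + a * t ^ 2) ∣ f := by
  simpa only [σP_linForm, hf.σP_eq] using map_dvd (σP F (algebraMap K F t)) h

theorem linForm_swap_dvd (hf : IsSL2Invariant K f) (h : linForm F a b c ∣ f) :
    linForm F c (-b) a ∣ f := by
  simpa only [τA_linForm, hf.τA_eq] using map_dvd (τA F) h

end IsSL2Invariant

end Invariant

section Split

/-- The quadratic form `a * T ^ 2 + b * T + c` splits over `K` with two distinct roots on the
projective line, provided that `K` is a field of characteristic different from two: its discriminant
is a nonzero square. -/
def IsSplit {K : Type*} [CommRing K] (a b c : K) : Prop :=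
  discrim a b c ≠ 0 ∧ IsSquare (discrim a b c)

theorem IsSplit.swap {K : Type*} [CommRing K] {a b c : K} (h : IsSplit a b c) :
    IsSplit c (-b) a := by
  have hdiscrim : discrim c (-b) a = discrim a b c := by simp only [discrim]; ring
  rwa [IsSplit, hdiscrim]

variable {F K : Type*} [Field F] [Field K] {a b c k t : K}

theorem isSplit_zero_iff : IsSplit 0 b c ↔ b ≠ 0 := by
  simp [IsSplit, discrim, IsSquare.sq]

variable [NeZero (2 : K)]

theorem isSplit_one_iff : IsSplit 1 (2 * t) (t ^ 2 - k) ↔ k ≠ 0 ∧ IsSquare k := by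
  have hdiscrim : discrim 1 (2 * t) (t ^ 2 - k) = k * 2 ^ 2 := by simp only [discrim]; ring
  have h2 : (2 : K) ^ 2 ≠ 0 := pow_ne_zero 2 two_ne_zero
  rw [IsSplit, hdiscrim, mul_ne_zero_iff_right h2]
  refine and_congr_right fun _ => ⟨fun h => ?_, fun h => h.mul (.sq 2)⟩
  simpa [h2] using h.div (.sq 2)

theorem IsSplit.exists_root (h : IsSplit a b c) (ha : a ≠ 0) :
    ∃ t, c + b * t + a * t ^ 2 = 0 ∧ b + 2 * a * t ≠ 0 := by
  obtain ⟨hne, s, hs⟩ := h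
  obtain ⟨t, ht⟩ := exists_quadratic_eq_zero ha ⟨s, hs⟩
  refine ⟨t, by linear_combination ht, fun h0 => hne ?_⟩
  rw [discrim_eq_sq_of_quadratic_eq_zero ht, add_comm, h0, zero_pow two_ne_zero]

variable [Algebra K F] {f : MvPolynomial (Fin 3) F}

theorem IsSL2Invariant.linForm_dvd_of_X_one_dvd (hf : IsSL2Invariant K f) (hX : X 1 ∣ f)
    (h : IsSplit a b c) : linForm F a b c ∣ f := by
  have hzero {b c : K} (hb : b ≠ 0) : linForm F 0 b c ∣ f := by
    have := hf.linForm_translate_dvd ((linForm_zero_zero_dvd_iff_X_one_dvd hb).mpr hX) (c / b)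
    simpa [mul_div_cancel₀ c hb] using this
  rcases eq_or_ne a 0 with rfl | ha
  · exact hzero (isSplit_zero_iff.mp h)
  -- Translating by a root removes the constant term, and the swap then removes the leading one.
  obtain ⟨t, ht, hb⟩ := h.exists_root ha
  have hroot : linForm F a (b + 2 * a * t) 0 ∣ f := by
    simpa using hf.linForm_swap_dvd (hzero (c := a) (neg_ne_zero.mpr hb))
  convert hf.linForm_translate_dvd hroot (-t) using 2
  · ring
  · linear_combination ht

end Split

section SplitFormProd

variable (F K : Type*) [Field F] [Field K] [Fintype K] [Algebra K F]

/-- The polynomial `B`: the first product is `β`, and the inner products of the second one are the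
`γ_k` for `k` a nonzero square. -/
noncomputable def splitFormProd : MvPolynomial (Fin 3) F :=
  (∏ t : K, linForm F 0 1 t) *
    ∏ k ∈ Finset.univ.filter (fun k : K => k ≠ 0 ∧ IsSquare k),
      ∏ t : K, linForm F 1 (2 * t) (t ^ 2 - k)

theorem splitFormProd_ne_zero : splitFormProd F K ≠ 0 := by
  simp [splitFormProd, Finset.prod_eq_zero_iff, linForm_eq_zero_iff]

theorem σP_splitFormProd (s : K) :
    σP F (algebraMap K F s) (splitFormProd F K) = splitFormProd F K := by
  simp only [splitFormProd, map_mul, map_prod, σP_linForm]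
  refine congrArg₂ (· * ·) ?_ ?_
  · exact Fintype.prod_equiv (Equiv.addRight s) _ _ fun t => by simp
  · refine Finset.prod_congr rfl fun k _ => Fintype.prod_equiv (Equiv.addRight s) _ _ fun t => ?_
    simp only [Equiv.coe_addRight]
    congr 1 <;> ring

variable {F K}

theorem linForm_zero_one_dvd_splitFormProd (t : K) : linForm F 0 1 t ∣ splitFormProd F K :=
  (Finset.dvd_prod_of_mem _ (Finset.mem_univ t)).mul_right _

theorem linForm_one_dvd_splitFormProd {k : K} (hk : k ≠ 0 ∧ IsSquare k) (t : K) :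
    linForm F 1 (2 * t) (t ^ 2 - k) ∣ splitFormProd F K := by
  have hfactor : linForm F 1 (2 * t) (t ^ 2 - k) ∣ ∏ t : K, linForm F 1 (2 * t) (t ^ 2 - k) :=
    Finset.dvd_prod_of_mem (fun t => linForm F 1 (2 * t) (t ^ 2 - k)) (Finset.mem_univ t)
  refine (hfactor.trans ?_).mul_left _
  exact Finset.dvd_prod_of_mem (fun k => ∏ t : K, linForm F 1 (2 * t) (t ^ 2 - k))
    (by simpa using hk)

variable {f : MvPolynomial (Fin 3) F} [NeZero (2 : K)]

theorem splitFormProd_dvd (h : ∀ a b c : K, IsSplit a b c → linForm F a b c ∣ f) :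
    splitFormProd F K ∣ f := by
  refine IsRelPrime.mul_dvd ?_ ?_ ?_
  · exact .prod_left fun t _ => .prod_right fun k _ => .prod_right fun s _ =>
      isRelPrime_linForm (by simp)
  · exact Finset.prod_dvd_of_isRelPrime
      (fun s _ t _ hst => isRelPrime_linForm fun hprop => hst (by simpa using hprop.2.2.symm))
      fun t _ => h _ _ _ (isSplit_zero_iff.mpr one_ne_zero)
  · have hrel {k l s t : K} (hne : ¬(k = l ∧ s = t)) : IsRelPrime
        (linForm F 1 (2 * s) (s ^ 2 - k)) (linForm F 1 (2 * t) (t ^ 2 - l)) := by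
      refine isRelPrime_linForm fun ⟨hlin, hconst, _⟩ => hne ?_
      obtain rfl : t = s := mul_left_cancel₀ two_ne_zero (by linear_combination hlin)
      exact ⟨by linear_combination hconst, rfl⟩
    refine Finset.prod_dvd_of_isRelPrime (fun k _ l _ hkl => ?_) fun k hk => ?_
    · exact .prod_left fun s _ => .prod_right fun t _ => hrel fun heq => hkl heq.1
    · exact Finset.prod_dvd_of_isRelPrime (fun s _ t _ hst => hrel fun heq => hst heq.2)
        fun t _ => h _ _ _ (isSplit_one_iff.mpr (Finset.mem_filter.mp hk).2)

theorem IsSplit.linForm_dvd_splitFormProd {a b c : K} (h : IsSplit a b c) :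
    linForm F a b c ∣ splitFormProd F K := by
  rcases eq_or_ne a 0 with rfl | ha
  · have hb := isSplit_zero_iff.mp h
    simpa [mul_div_cancel₀ c hb] using
      (linForm_mul_dvd_iff hb).mpr (linForm_zero_one_dvd_splitFormProd (c / b))
  · -- These come from completing the square in `T ^ 2 + (b / a) * T + c / a`.
    let t := b / (2 * a)
    let k := discrim a b c / (2 * a) ^ 2
    have hk : k ≠ 0 ∧ IsSquare k :=
      ⟨div_ne_zero h.1 (pow_ne_zero 2 (mul_ne_zero two_ne_zero ha)), h.2.div (.sq _)⟩
    have hb : a * (2 * t) = b := by simp only [t]; field_simp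
    have hc : a * (t ^ 2 - k) = c := by simp only [t, k, discrim]; field_simp; ring
    simpa only [mul_one, hb, hc] using
      (linForm_mul_dvd_iff ha).mpr (linForm_one_dvd_splitFormProd hk t)

theorem isSL2Invariant_splitFormProd : IsSL2Invariant K (splitFormProd F K) where
  σP_eq := σP_splitFormProd F K
  τA_eq := by
    refine τA_eq_self_of_dvd (by simpa using σP_splitFormProd F K 1) ?_
    refine splitFormProd_dvd fun a b c h => ?_
    simpa [τA_linForm] using map_dvd (τA F) (h.swap.linForm_dvd_splitFormProd (F := F))

theorem odd_weight_invariant_divisible_by_B_general (hf : IsSL2Invariant K f) (hX : X 1 ∣ f) :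
    ∃ g, IsSL2Invariant K g ∧ f = splitFormProd F K * g := by
  obtain ⟨g, rfl⟩ : splitFormProd F K ∣ f :=
    splitFormProd_dvd fun _ _ _ => hf.linForm_dvd_of_X_one_dvd hX
  exact ⟨g, isSL2Invariant_splitFormProd.of_mul_left_cancel (splitFormProd_ne_zero F K) hf, rfl⟩

end SplitFormProd

/-- Every `SL₂(F_q)`-invariant polynomial all of whose monomials have odd weight
(the weight of `a0^{e0} a1^{e1} a2^{e2}` is `e1 + 2·e2`) is divisible by `B`
within the ring of `SL₂(F_q)`-invariants. -/
theorem odd_weight_invariant_divisible_by_B (F : Type*) [Field F] (p n q : ℕ) (hp : p.Prime)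
    (hp2 : p ≠ 2) [CharP F p] (hn : n ≠ 0) (hq : q = p ^ n)
    (Fq : Type*) [Field Fq] [Fintype Fq] [Algebra Fq F] (hcard : Fintype.card Fq = q)
    (β B : MvPolynomial (Fin 3) F)
    (hβ : β = ∏ c : Fq, (X 1 + C (algebraMap Fq F c) * X 0))
    (hB : B = β * ∏ k ∈ Finset.univ.filter (fun k : Fq => k ≠ 0 ∧ IsSquare k),
      ∏ c : Fq, (X 2 + C (2 * algebraMap Fq F c) * X 1 +
        C ((algebraMap Fq F c) ^ 2 - algebraMap Fq F k) * X 0))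
    (f : MvPolynomial (Fin 3) F)
    (hfP : ∀ c : Fq, σP F (algebraMap Fq F c) f = f)
    (hfτ : τA F f = f)
    (hodd : ∀ m ∈ f.support, Odd (m 1 + 2 * m 2)) :
    ∃ g : MvPolynomial (Fin 3) F,
      (∀ c : Fq, σP F (algebraMap Fq F c) g = g) ∧ τA F g = g ∧ f = B * g := by
  have : CharP Fq p := (algebraMap Fq F).charP (algebraMap Fq F).injective p
  have : NeZero (2 : Fq) := ⟨Ring.two_ne_zero (by rwa [ringChar.eq Fq p])⟩
  have hBprod : B = splitFormProd F Fq := by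
    simp only [hB, hβ, splitFormProd, linForm, map_zero, map_one, map_mul, map_sub, map_pow,
      map_ofNat, zero_mul, one_mul, zero_add]
  obtain ⟨g, hg, hfg⟩ := odd_weight_invariant_divisible_by_B_general
    ⟨hfP, hfτ⟩ (X_one_dvd_of_odd_weight hodd)
  exact ⟨g, hg.σP_eq, hg.τA_eq, hBprod ▸ hfg⟩
end
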